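/- Let a, b, z be complex numbers such that b is not a pole of the relevant Pochhammer denominators, i.e., 2b, b, and b+2n (for all n ≥ 0) avoid nonpositive integers so that all terms are defined. Then the summation formula M(2a; 2b; z) = Σ_{n=0}^∞ ((a)_n (b)_n (b−a)_n / ((b)_{2n} (2b)_{2n} · n!)) · (−z²)^n · M(a+n; b+2n; z) holds for all such a, b and all z ∈ ℂ (without any positivity assumptions on real parts). -/

import Mathlib

/-- Pochhammer symbol `(x)_n = x (x+1) ⋯ (x+n-1)`. -/
noncomputable def poch (x : ℂ) (n : ℕ) : ℂ := ∏ k ∈ Finset.range n, (x + k)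

/-- Kummer's confluent hypergeometric function `M(a; b; z)`. -/
noncomputable def kummerM (a b z : ℂ) : ℂ :=
  ∑' n : ℕ, poch a n / (poch b n * n.factorial) * z ^ n

lemma poch_zero' (x : ℂ) : poch x 0 = 1 := by simp [poch]

lemma poch_succ' (x : ℂ) (n : ℕ) : poch x (n + 1) = poch x n * (x + n) := by
  simp [poch, Finset.prod_range_succ]

lemma poch_add' (x : ℂ) (m n : ℕ) : poch x (m + n) = poch x m * poch (x + m) n := by
  simp [poch, Finset.prod_range_add, add_assoc]

lemma poch_ne_zero' (x : ℂ) (hx : ∀ m : ℕ, x ≠ -(m : ℂ)) (n : ℕ) : poch x n ≠ 0 := by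
  unfold poch
  rw [Finset.prod_ne_zero_iff]
  intro k _ h
  exact hx k (eq_neg_of_add_eq_zero_left h)

lemma poch_upper (x : ℂ) : ∃ A : ℝ, 0 < A ∧ ∀ n, ‖poch x n‖ ≤ A ^ n * n.factorial := by
  refine ⟨‖x‖ + 1, by positivity, fun n => ?_⟩
  induction n with
  | zero => simp [poch]
  | succ n ih =>
    rw [poch_succ', norm_mul, Nat.factorial_succ, pow_succ]
    push_cast
    have h1 : ‖x + n‖ ≤ (‖x‖ + 1) * (n + 1) := by
      have := norm_add_le x (n : ℂ)
      rw [Complex.norm_natCast] at this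
      have h2 : 0 ≤ ‖x‖ * n := by positivity
      nlinarith
    calc ‖poch x n‖ * ‖x + n‖ ≤ ((‖x‖ + 1) ^ n * n.factorial) * ((‖x‖ + 1) * (n + 1)) := by
          gcongr
      _ = _ := by ring

lemma shift_lower (x : ℂ) (hx : ∀ m : ℕ, x ≠ -(m : ℂ)) :
    ∃ d : ℝ, 0 < d ∧ ∀ n : ℕ, d * (n + 1) ≤ ‖x + n‖ := by
  obtain ⟨M, hM⟩ := exists_nat_gt (2 * ‖x‖ + 1)
  have key : ∀ K : ℕ, ∃ d : ℝ, 0 < d ∧ ∀ n < K, d * (n + 1) ≤ ‖x + n‖ := by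
    intro K
    induction K with
    | zero => exact ⟨1, one_pos, by simp⟩
    | succ K ih =>
      obtain ⟨d, hd, h⟩ := ih
      have hp : 0 < ‖x + K‖ := by
        rw [norm_pos_iff]
        intro h0
        exact hx K (eq_neg_of_add_eq_zero_left h0)
      refine ⟨min d (‖x + K‖ / (K + 1)), by positivity, fun n hn => ?_⟩
      rcases Nat.lt_succ_iff_lt_or_eq.mp hn with h1 | rfl
      · refine le_trans ?_ (h n h1)
        gcongr
        exact min_le_left _ _
      · rw [← le_div_iff₀ (by positivity)]
        exact min_le_right _ _
  obtain ⟨d, hd, h⟩ := key M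
  refine ⟨min d (1 / 4), by positivity, fun n => ?_⟩
  rcases lt_or_ge n M with h1 | h1
  · refine le_trans ?_ (h n h1)
    gcongr
    exact min_le_left _ _
  · have h2 : (M : ℝ) ≤ n := by exact_mod_cast h1
    have h3 : ‖(n : ℂ)‖ ≤ ‖x + n‖ + ‖x‖ := by
      have := norm_sub_le (x + n) x
      simpa using this
    rw [Complex.norm_natCast] at h3
    have h4 : min d (1 / 4) * ((n : ℝ) + 1) ≤ 1 / 4 * (n + 1) := by
      gcongr
      exact min_le_right _ _
    have := norm_nonneg x
    linarith

lemma poch_lower (x : ℂ) (hx : ∀ m : ℕ, x ≠ -(m : ℂ)) :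
    ∃ d : ℝ, 0 < d ∧ ∀ n, d ^ n * n.factorial ≤ ‖poch x n‖ := by
  obtain ⟨d, hd, h⟩ := shift_lower x hx
  refine ⟨d, hd, fun n => ?_⟩
  induction n with
  | zero => simp [poch]
  | succ n ih =>
    rw [poch_succ', norm_mul, Nat.factorial_succ, pow_succ]
    push_cast
    calc _ = (d ^ n * n.factorial) * (d * (n + 1)) := by ring
      _ ≤ _ := by
        gcongr
        exact h n

/-- The summand of the terminating identity. -/
noncomputable def termT (a b : ℂ) (N n : ℕ) : ℂ :=
  if 2 * n ≤ N then
    (-1) ^ n * poch a (N - n) * poch b n * poch (b - a) n /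
      (poch (2 * b) (2 * n) * n.factorial * (N - 2 * n).factorial)
  else 0

lemma termT_of_lt (a b : ℂ) {N n : ℕ} (h : N < 2 * n) : termT a b N n = 0 := by
  unfold termT
  rw [if_neg (by omega)]

lemma termT_add (a b : ℂ) (n k : ℕ) : termT a b (2 * n + k) n =
    (-1) ^ n * poch a (n + k) * poch b n * poch (b - a) n /
      (poch (2 * b) (2 * n) * n.factorial * k.factorial) := by
  unfold termT
  rw [if_pos (by omega), show 2 * n + k - n = n + k by omega,
    show 2 * n + k - 2 * n = k by omega]

lemma shift_ne (x : ℂ) (hx : ∀ m : ℕ, x ≠ -(m : ℂ)) (n : ℕ) : x + n ≠ 0 := fun h =>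
  hx n (eq_neg_of_add_eq_zero_left h)

lemma partial_sum (a b : ℂ) (h2b : ∀ m : ℕ, 2 * b ≠ -(m : ℂ)) (N m : ℕ) :
    ∑ n ∈ Finset.range (m + 1), ((2 * b + N) * (N + 1) * termT a b (N + 1) n
      - (2 * a + N) * (b + N) * termT a b N n) =
    (b - a + m) * ((N : ℂ) - 2 * m) * termT a b N m := by
  induction m with
  | zero =>
    have e1 := termT_add a b 0 N
    have e2 := termT_add a b 0 (N + 1)
    simp only [Nat.mul_zero, Nat.zero_add] at e1 e2
    rw [zero_add, Finset.sum_range_one, e1, e2, poch_succ', Nat.factorial_succ]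
    have h1 : (N.factorial : ℂ) ≠ 0 := by exact_mod_cast N.factorial_ne_zero
    have h2 : (N : ℂ) + 1 ≠ 0 := by exact_mod_cast N.succ_ne_zero
    simp only [poch_zero', Nat.factorial_zero]
    push_cast
    field_simp
    ring
  | succ m ih =>
    rw [Finset.sum_range_succ, ih]
    obtain ⟨c, hc⟩ : ∃ c, c = b + m := ⟨_, rfl⟩
    have hb0 : c ≠ 0 := by
      have := shift_ne _ h2b (2 * m)
      contrapose! this
      push_cast
      linear_combination 2 * this - 2 * hc
    obtain ⟨d, hd⟩ : ∃ d, d = 2 * c + 1 := ⟨_, rfl⟩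
    have hb1 : d ≠ 0 := by
      have := shift_ne _ h2b (2 * m + 1)
      contrapose! this
      push_cast
      linear_combination this - 2 * hc - hd
    have hP := poch_ne_zero' _ h2b (2 * m)
    have hf : (m.factorial : ℂ) ≠ 0 := by exact_mod_cast m.factorial_ne_zero
    have hm1 : (m : ℂ) + 1 ≠ 0 := by exact_mod_cast m.succ_ne_zero
    have hPP : poch (2 * b) (2 * (m + 1)) =
        poch (2 * b) (2 * m) * (2 * c) * d := by
      rw [show 2 * (m + 1) = 2 * m + 1 + 1 by ring, poch_succ', poch_succ', hd, hc]
      push_cast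
      ring
    rcases lt_trichotomy N (2 * m + 1) with h | h | h
    · rw [termT_of_lt a b (show N < 2 * (m + 1) by omega),
        termT_of_lt a b (show N + 1 < 2 * (m + 1) by omega)]
      rcases Nat.lt_or_ge N (2 * m) with h' | h'
      · rw [termT_of_lt a b h']; ring
      · have : N = 2 * m := by omega
        subst this
        push_cast; ring
    · subst h
      rw [termT_of_lt a b (show 2 * m + 1 < 2 * (m + 1) by omega), termT_add a b m 1,
        show 2 * m + 1 + 1 = 2 * (m + 1) + 0 by ring, termT_add a b (m + 1) 0, hPP,
        poch_succ' b, poch_succ' (b - a), ← hc, Nat.factorial_succ m, add_zero]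
      push_cast at *
      simp only [Nat.factorial_zero, Nat.factorial_one]
      generalize poch a (m + 1) = X
      generalize poch (2 * b) (2 * m) = P at *
      generalize poch b m = Y
      generalize poch (b - a) m = Z
      clear ih hPP
      obtain rfl : b = c - m := by rw [hc]; ring
      field_simp
      rw [hd]
      ring
    · obtain ⟨k, rfl⟩ : ∃ k, N = 2 * m + (k + 2) := ⟨N - (2 * m + 2), by omega⟩
      have e1 := termT_add a b m (k + 2)
      have e2 := termT_add a b (m + 1) k
      have e3 := termT_add a b (m + 1) (k + 1)
      rw [show 2 * (m + 1) + k = 2 * m + (k + 2) by ring] at e2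
      rw [show 2 * (m + 1) + (k + 1) = 2 * m + (k + 2) + 1 by ring] at e3
      have hk : (k.factorial : ℂ) ≠ 0 := by exact_mod_cast k.factorial_ne_zero
      have hk1 : (k : ℂ) + 1 ≠ 0 := by exact_mod_cast k.succ_ne_zero
      have hk2 : (k : ℂ) + 1 + 1 ≠ 0 := by exact_mod_cast (k + 1).succ_ne_zero
      rw [e1, e2, e3, hPP, show m + (k + 2) = m + 1 + k + 1 by ring,
        show m + 1 + (k + 1) = m + 1 + k + 1 by ring, poch_succ' a, poch_succ' b,
        poch_succ' (b - a), ← hc, Nat.factorial_succ (k + 1), Nat.factorial_succ k,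
        Nat.factorial_succ m]
      push_cast at *
      generalize poch a (m + 1 + k) = X
      generalize poch (2 * b) (2 * m) = P at *
      generalize poch b m = Y
      generalize poch (b - a) m = Z
      clear ih hPP
      obtain rfl : b = c - m := by rw [hc]; ring
      field_simp
      rw [hd]
      ring

lemma finite_identity (a b : ℂ) (h2b : ∀ m : ℕ, 2 * b ≠ -(m : ℂ)) (N : ℕ) :
    ∑ n ∈ Finset.range (N + 1), termT a b N n =
      poch (2 * a) N * poch b N / (poch (2 * b) N * N.factorial) := by
  induction N with
  | zero =>
    have := termT_add a b 0 0
    simp only [Nat.mul_zero, Nat.zero_add] at this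
    simp [this, poch_zero']
  | succ N ih =>
    have h := partial_sum a b h2b N (N + 1)
    rw [termT_of_lt a b (show N < 2 * (N + 1) by omega), mul_zero, Finset.sum_sub_distrib,
      ← Finset.mul_sum, ← Finset.mul_sum, Finset.sum_range_succ (termT a b N) (N + 1),
      termT_of_lt a b (show N < 2 * (N + 1) by omega), add_zero, ih] at h
    have h0 := shift_ne _ h2b N
    have hP := poch_ne_zero' _ h2b N
    have hf : (N.factorial : ℂ) ≠ 0 := by exact_mod_cast N.factorial_ne_zero
    have hN1 : (N : ℂ) + 1 ≠ 0 := by exact_mod_cast N.succ_ne_zero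
    have h' := sub_eq_zero.mp h
    rw [poch_succ', poch_succ', poch_succ', Nat.factorial_succ]
    apply mul_left_cancel₀ (mul_ne_zero h0 hN1)
    rw [h']
    push_cast
    field_simp

/-- The double series. -/
noncomputable def dbl (a b z : ℂ) (p : ℕ × ℕ) : ℂ :=
  termT a b p.2 p.1 / poch b p.2 * z ^ p.2

lemma dbl_bound (a b z : ℂ) (h2b : ∀ m : ℕ, 2 * b ≠ -(m : ℂ)) (hb : ∀ m : ℕ, b ≠ -(m : ℂ)) :
    ∃ P Q : ℝ, ∀ n k : ℕ, ‖dbl a b z (n, 2 * n + k)‖ ≤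
      (P ^ n / n.factorial) * (Q ^ k / k.factorial) := by
  obtain ⟨A, hA, hA'⟩ := poch_upper a
  obtain ⟨B, hB, hB'⟩ := poch_upper b
  obtain ⟨C, hC, hC'⟩ := poch_upper (b - a)
  obtain ⟨d, hd, hd'⟩ := poch_lower b hb
  obtain ⟨e, he, he'⟩ := poch_lower (2 * b) h2b
  refine ⟨A * B * C * ‖z‖ ^ 2 / (d ^ 2 * e ^ 2), A * ‖z‖ / d, fun n k => ?_⟩
  have hE : ‖dbl a b z (n, 2 * n + k)‖ = ‖poch a (n + k)‖ * ‖poch b n‖ * ‖poch (b - a) n‖ /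
      (‖poch (2 * b) (2 * n)‖ * n.factorial * k.factorial * ‖poch b (2 * n + k)‖) *
      ‖z‖ ^ (2 * n + k) := by
    simp only [dbl, termT_add]
    simp [div_div]
  rw [hE]
  have f1 : ((n + k).factorial : ℝ) ≤ (2 * n + k).factorial := by
    exact_mod_cast Nat.factorial_le (by omega)
  have f2 : (n.factorial : ℝ) * n.factorial ≤ (2 * n).factorial := by
    have := Nat.le_of_dvd (Nat.factorial_pos _) (Nat.factorial_mul_factorial_dvd_factorial_add n n)
    rw [← two_mul] at this
    exact_mod_cast this
  calc _ ≤ (A ^ (n + k) * (2 * n + k).factorial) * (B ^ n * n.factorial) * (C ^ n * n.factorial) /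
      ((e ^ (2 * n) * (n.factorial * n.factorial)) * n.factorial * k.factorial *
        (d ^ (2 * n + k) * (2 * n + k).factorial)) * ‖z‖ ^ (2 * n + k) := by
        gcongr
        · exact (hA' _).trans (by gcongr)
        · exact hB' n
        · exact hC' n
        · exact le_trans (by gcongr) (he' _)
        · exact hd' _
    _ = _ := by
        have g1 : (n.factorial : ℝ) ≠ 0 := by positivity
        have g2 : (k.factorial : ℝ) ≠ 0 := by positivity
        have g3 : ((2 * n + k).factorial : ℝ) ≠ 0 := by positivity
        simp only [div_pow, mul_pow, pow_add, pow_mul]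
        field_simp

lemma dbl_inj : Function.Injective (fun p : ℕ × ℕ => (p.1, 2 * p.1 + p.2)) := by
  rintro ⟨n, k⟩ ⟨n', k'⟩ h
  simp only [Prod.mk.injEq] at h
  obtain ⟨rfl, h⟩ := h
  simp only [Prod.mk.injEq, true_and]
  omega

lemma dbl_summable (a b z : ℂ) (h2b : ∀ m : ℕ, 2 * b ≠ -(m : ℂ)) (hb : ∀ m : ℕ, b ≠ -(m : ℂ)) :
    Summable (dbl a b z) := by
  rw [← dbl_inj.summable_iff]
  · obtain ⟨P, Q, h⟩ := dbl_bound a b z h2b hb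
    have hs : Summable (fun p : ℕ × ℕ => (P ^ p.1 / p.1.factorial) * (Q ^ p.2 / p.2.factorial)) :=
      summable_mul_of_summable_norm (Real.summable_pow_div_factorial P).norm
        (Real.summable_pow_div_factorial Q).norm
    exact Summable.of_norm_bounded hs (fun p => h p.1 p.2)
  · rintro ⟨n, N⟩ hp
    have : N < 2 * n := by
      by_contra hcon
      exact hp ⟨(n, N - 2 * n), by simp only [Prod.mk.injEq, true_and]; omega⟩
    simp [dbl, termT_of_lt a b this]


/-- Summation formula for Kummer's confluent hypergeometric function, valid for all
`a, b, z ∈ ℂ` provided `2b`, `b`, and all `b + 2n` avoid nonpositive integers. -/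
theorem kummerM_sum_formula_general (a b z : ℂ)
    (h2b : ∀ m : ℕ, 2 * b ≠ -(m : ℂ))
    (hb : ∀ m : ℕ, b ≠ -(m : ℂ))
    (hb2n : ∀ n m : ℕ, b + 2 * n ≠ -(m : ℂ)) :
    kummerM (2 * a) (2 * b) z =
      ∑' n : ℕ, poch a n * poch b n * poch (b - a) n /
          (poch b (2 * n) * poch (2 * b) (2 * n) * n.factorial) * (-z ^ 2) ^ n *
        kummerM (a + n) (b + 2 * n) z := by
  have hs := dbl_summable a b z h2b hb
  have hcomm : ∑' N, ∑' n, dbl a b z (n, N) = ∑' n, ∑' N, dbl a b z (n, N) :=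
    Summable.tsum_comm (f := fun n N => dbl a b z (n, N)) hs
  have hL : ∀ N, ∑' n, dbl a b z (n, N) =
      poch (2 * a) N / (poch (2 * b) N * N.factorial) * z ^ N := by
    intro N
    rw [tsum_eq_sum (s := Finset.range (N + 1))]
    · simp only [dbl]
      rw [← Finset.sum_mul, ← Finset.sum_div, finite_identity a b h2b]
      have := poch_ne_zero' _ hb N
      field_simp
    · intro n hn
      rw [Finset.mem_range] at hn
      simp [dbl, termT_of_lt a b (show N < 2 * n by omega)]
  have hR : ∀ n, ∑' N, dbl a b z (n, N) = poch a n * poch b n * poch (b - a) n /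
          (poch b (2 * n) * poch (2 * b) (2 * n) * n.factorial) * (-z ^ 2) ^ n *
        kummerM (a + n) (b + 2 * n) z := by
    intro n
    have hi : Function.Injective (fun k : ℕ => 2 * n + k) := fun k k' h => by
      simpa using h
    rw [← hi.tsum_eq, kummerM, ← tsum_mul_left]
    · refine tsum_congr fun k => ?_
      simp only [dbl, termT_add]
      rw [poch_add' a, poch_add' b (2 * n) k, neg_pow (z ^ 2) n, pow_add, pow_mul]
      push_cast
      simp only [div_eq_mul_inv, mul_inv]
      ring
    · intro N hN
      by_contra hcon
      apply hN
      have : N < 2 * n := by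
        by_contra h
        exact hcon ⟨N - 2 * n, by simp only; omega⟩
      simp [dbl, termT_of_lt a b this]
  rw [kummerM, ← tsum_congr hL, hcomm, tsum_congr hR]
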